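/- Let α ∈ ℂ and let F = (f_1, f_2) be a multigerm in ℂ^n (n ≥ 3) whose 5-jet equals ((t², t³, 0, …, 0), (t⁵, t⁴ + αt⁵, t³, 0, …, 0)). Then F is not simple. -/

import Mathlib

/-!
The coefficient `α` of the family is a modulus: its seventh power is an invariant of
`A`-equivalence.

Suppose `g ∘ G = G' ∘ h`, where `G`, `G'` have the given `5`-jets with parameters `α`, `β`, and
let `L` be the linear part of `g`. As the second components have order `3`, that relation modulo
`t⁶` involves only `L`; on the first components (of order `2`) the same holds modulo `t⁴`
(`linear_part`). Write `h₁ = a t + …` and `h₂ = b t + b' t² + …`. Comparing coefficients in the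
first three coordinates gives `a² = b⁵`, `a³ = b⁴`, `b' = 0` and `α = b β`. Since `a`, `b` do not
vanish, `b⁷ = 1`, whence `α⁷ = β⁷` (`pow_seven_eq`).

Adding `ε t⁵` to the second coordinate of the second component of `F` changes `α` to `α + ε`. The
result is still a multigerm, since the `5`-jet alone forces the two branches to meet only at the
origin (`HasForm.isMultigerm`), and its jets depend continuously on `ε`, so every neighbourhood of
a jet of `F` contains these deformations for all small `ε`. Each `A`-class contains only finitely
many of them, because `x⁷ = c` has finitely many solutions, so finitely many classes do not
suffice.
-/

open scoped Topology

namespace CurveSing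

/-- Pad a curve in `ℂ^d` to a curve in `ℂ^n` by appending zero coordinates. -/
def pad (d n : ℕ) (f : ℂ → Fin d → ℂ) : ℂ → Fin n → ℂ :=
  fun t j => if hj : (j : ℕ) < d then f t ⟨(j : ℕ), hj⟩ else 0

/-- The curve `t ↦ (0,…,0,t,0,…,0)` (the `i`-th coordinate axis of `ℂ^n`). -/
def axis (n i : ℕ) : ℂ → Fin n → ℂ := fun t j => if (j : ℕ) = i then t else 0

/-- The multigerm consisting of the `n` coordinate axes of `ℂ^n`. -/
def Gn (n : ℕ) : Fin n → ℂ → Fin n → ℂ := fun i => axis n (i : ℕ)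

/-- A (representative of a) curve germ in `ℂ^n`. -/
def IsCurveGerm (n : ℕ) (f : ℂ → Fin n → ℂ) : Prop :=
  AnalyticAt ℂ f 0 ∧ f 0 = 0

/-- A multigerm with `k` components in `ℂ^n`: each component is a curve germ and the
images of sufficiently small representatives of distinct components meet only at `0`. -/
def IsMultigerm (n k : ℕ) (F : Fin k → ℂ → Fin n → ℂ) : Prop :=
  (∀ i, IsCurveGerm n (F i)) ∧
  ∃ ε > (0 : ℝ), ∀ i j : Fin k, i ≠ j → ∀ s t : ℂ,
    ‖s‖ < ε → ‖t‖ < ε → F i s = F j t → F i s = 0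

/-- A germ of a biholomorphism `(E,0) → (E,0)`. -/
def IsBiholoGerm {E : Type*} [NormedAddCommGroup E] [NormedSpace ℂ E] (g : E → E) : Prop :=
  AnalyticAt ℂ g 0 ∧ g 0 = 0 ∧
  ∃ g' : E → E, AnalyticAt ℂ g' 0 ∧ g' 0 = 0 ∧
    (∀ᶠ x in 𝓝 (0 : E), g' (g x) = x) ∧ (∀ᶠ x in 𝓝 (0 : E), g (g' x) = x)

/-- `A`-equivalence of multigerms with `k` components in `ℂ^n`. -/
def AEquiv (n k : ℕ) (F F' : Fin k → ℂ → Fin n → ℂ) : Prop :=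
  ∃ g : (Fin n → ℂ) → Fin n → ℂ, IsBiholoGerm g ∧
    ∃ h : Fin k → ℂ → ℂ, (∀ i, IsBiholoGerm (h i)) ∧
      ∀ i, (fun t => g (F i t)) =ᶠ[𝓝 (0 : ℂ)] fun t => F' i (h i t)

/-- Stable `A`-equivalence: the two multigerms become `A`-equivalent after the standard
inclusions into a common `ℂ^N`. -/
def StablyAEquiv (n n' k : ℕ) (F : Fin k → ℂ → Fin n → ℂ)
    (F' : Fin k → ℂ → Fin n' → ℂ) : Prop :=
  ∃ N, n ≤ N ∧ n' ≤ N ∧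
    AEquiv N k (fun i => pad n N (F i)) (fun i => pad n' N (F' i))

/-- The `m`-jet of a curve, recorded as the tuple of iterated derivatives at `0`
of orders `0,…,m` (this determines and is determined by the degree-`m` Taylor
polynomial at `0`). -/
noncomputable def jet (n m : ℕ) (f : ℂ → Fin n → ℂ) : Fin (m + 1) → Fin n → ℂ :=
  fun i => iteratedDeriv (i : ℕ) f 0

/-- The `m`-jet of a multigerm. -/
noncomputable def jetF (n k m : ℕ) (F : Fin k → ℂ → Fin n → ℂ) : Fin k → Fin (m + 1) → Fin n → ℂ :=
  fun i => jet n m (F i)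

/-- A multigerm is simple if some neighbourhood of one of its jets meets only finitely
many `A`-equivalence classes of multigerms. -/
def Simple (n k : ℕ) (F : Fin k → ℂ → Fin n → ℂ) : Prop :=
  ∃ m : ℕ, ∃ U : Set (Fin k → Fin (m + 1) → Fin n → ℂ), IsOpen U ∧ jetF n k m F ∈ U ∧
    ∃ (N : ℕ) (R : Fin N → Fin k → ℂ → Fin n → ℂ),
      ∀ G : Fin k → ℂ → Fin n → ℂ, IsMultigerm n k G → jetF n k m G ∈ U →
        ∃ i, AEquiv n k G (R i)

/-- A curve germ is regular if its derivative at `0` does not vanish. -/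
def IsRegular (n : ℕ) (f : ℂ → Fin n → ℂ) : Prop := deriv f 0 ≠ 0

/-- `F` is stably `A`-equivalent to the pair with first component the regular curve
`(t,0,…,0)` and second component `g` (a curve in `ℂ^{d'}`). -/
def PairNF (d : ℕ) (F : Fin 2 → ℂ → Fin d → ℂ) (d' : ℕ) (g : ℂ → Fin d' → ℂ) : Prop :=
  StablyAEquiv d d' 2 F ![axis d' 0, g]

end CurveSing

namespace CurveSing

open Asymptotics Filter

/-! ### Groupoid properties of germs of biholomorphisms and of `AEquiv` -/

theorem IsBiholoGerm.symm' {E : Type*} [NormedAddCommGroup E] [NormedSpace ℂ E] {g : E → E}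
    (hg : IsBiholoGerm g) : ∃ g' : E → E, IsBiholoGerm g' ∧
      (∀ᶠ x in 𝓝 (0 : E), g' (g x) = x) ∧ (∀ᶠ x in 𝓝 (0 : E), g (g' x) = x) := by
  obtain ⟨ha, h0, g', ha', h0', h1, h2⟩ := hg
  exact ⟨g', ⟨ha', h0', g, ha, h0, h2, h1⟩, h1, h2⟩

theorem IsBiholoGerm.tendsto {E : Type*} [NormedAddCommGroup E] [NormedSpace ℂ E] {g : E → E}
    (hg : IsBiholoGerm g) : Tendsto g (𝓝 0) (𝓝 0) := by
  have := hg.1.continuousAt.tendsto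
  rwa [hg.2.1] at this

theorem IsBiholoGerm.comp {E : Type*} [NormedAddCommGroup E] [NormedSpace ℂ E] {f g : E → E}
    (hf : IsBiholoGerm f) (hg : IsBiholoGerm g) : IsBiholoGerm fun x => f (g x) := by
  obtain ⟨f', hf', hf1, hf2⟩ := hf.symm'
  obtain ⟨g', hg', hg1, hg2⟩ := hg.symm'
  refine ⟨AnalyticAt.fun_comp (by rw [hg.2.1]; exact hf.1) hg.1, by simp [hf.2.1, hg.2.1],
    fun x => g' (f' x), AnalyticAt.fun_comp (by rw [hf'.2.1]; exact hg'.1) hf'.1,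
    by simp [hf'.2.1, hg'.2.1], ?_, ?_⟩
  · filter_upwards [hg1, hg.tendsto.eventually hf1] with x h1 h2
    rw [h2, h1]
  · filter_upwards [hf2, hf'.tendsto.eventually hg2] with x h1 h2
    rw [h2, h1]

theorem AEquiv.trans {n k : ℕ} {F G H : Fin k → ℂ → Fin n → ℂ}
    (h₁ : AEquiv n k F G) (h₂ : AEquiv n k G H) : AEquiv n k F H := by
  obtain ⟨g, hg, a, ha, e⟩ := h₁
  obtain ⟨g', hg', b, hb, e'⟩ := h₂
  refine ⟨fun x => g' (g x), hg'.comp hg, fun i t => b i (a i t),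
    fun i => (hb i).comp (ha i), fun i => ?_⟩
  filter_upwards [e i, (ha i).tendsto.eventually (e' i)] with t h1 h2
  rw [h1, h2]

/-- Continuity of the source at `0` is needed because the inverse of the coordinate change is
only a local one. -/
theorem AEquiv.symm {n k : ℕ} {F G : Fin k → ℂ → Fin n → ℂ}
    (hF : ∀ i, Tendsto (F i) (𝓝 0) (𝓝 0)) (h : AEquiv n k F G) : AEquiv n k G F := by
  obtain ⟨g, hg, a, ha, e⟩ := h
  obtain ⟨g', hg', hl, -⟩ := hg.symm'
  choose a' ha' hal har using fun i => (ha i).symm'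
  refine ⟨g', hg', a', ha', fun i => ?_⟩
  filter_upwards [har i, (ha' i).tendsto.eventually (e i),
    (ha' i).tendsto.eventually ((hF i).eventually hl)] with t h1 h2 h3
  rw [h1] at h2
  rw [← h2, h3]

theorem IsBiholoGerm.deriv_ne_zero {h : ℂ → ℂ} (hh : IsBiholoGerm h) : deriv h 0 ≠ 0 := by
  obtain ⟨ha, h0, h', ha', h0', h1, -⟩ := hh
  intro hd
  have H : HasDerivAt (fun t => h' (h t)) (deriv h' 0 * deriv h 0) 0 := by
    have := ha'.differentiableAt.hasDerivAt
    rw [← h0] at this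
    simpa [Function.comp_def, h0] using this.comp (0 : ℂ) ha.differentiableAt.hasDerivAt
  have H' : HasDerivAt (fun t : ℂ => t) (deriv h' 0 * deriv h 0) 0 :=
    H.congr_of_eventuallyEq (h1.mono fun t ht => ht.symm)
  have := H'.unique (hasDerivAt_id' 0)
  simp [hd] at this

/-! ### Comparing coefficients modulo powers of `t` -/

theorem isBigO_pow_mul (N : ℕ) {q : ℂ → ℂ} (hq : ContinuousAt q 0) :
    (fun t : ℂ => t ^ N * q t) =O[𝓝 0] fun t : ℂ => t ^ N := by
  simpa using (isBigO_refl (fun t : ℂ => t ^ N) (𝓝 0)).mul (hq.tendsto.isBigO_one ℂ)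

theorem isBigO_pow_pow {M N : ℕ} (h : N ≤ M) :
    (fun t : ℂ => t ^ M) =O[𝓝 0] fun t : ℂ => t ^ N := by
  obtain ⟨k, rfl⟩ := Nat.exists_eq_add_of_le h
  simpa [pow_add] using isBigO_pow_mul N (q := fun t => t ^ k) (by fun_prop)

theorem coeff_one {a : ℂ} {n : ℕ} {q : ℂ → ℂ} (hq : ContinuousAt q 0)
    (h : (fun t : ℂ => a * t ^ n + t ^ (n + 1) * q t) =O[𝓝 0] fun t : ℂ => t ^ (n + 1)) :
    a = 0 := by
  have h1 : (fun t : ℂ => a * t ^ n) =O[𝓝 0] fun t : ℂ => t ^ (n + 1) := by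
    simpa using h.sub (isBigO_pow_mul (n + 1) hq)
  by_contra ha
  have h2 : (fun t : ℂ => t ^ n) =O[𝓝 0] fun t : ℂ => t ^ (n + 1) :=
    (isBigO_const_mul_left_iff ha).1 h1
  have h3 : (fun t : ℂ => t ^ (n + 1)) =o[𝓝 0] fun t : ℂ => t ^ n := by
    exact isLittleO_pow_pow (Nat.lt_succ_self n)
  have h4 := h2.trans_isLittleO h3
  refine isLittleO_irrefl ?_ h4
  have : ∃ᶠ t : ℂ in 𝓝[≠] 0, t ≠ 0 :=
    (eventually_mem_nhdsWithin (a := (0 : ℂ)) (s := {0}ᶜ)).frequently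
  exact (this.filter_mono nhdsWithin_le_nhds).mono fun t ht => pow_ne_zero n ht

theorem coeff_two {a b : ℂ} {n : ℕ} {q : ℂ → ℂ} (hq : ContinuousAt q 0)
    (h : (fun t : ℂ => a * t ^ n + b * t ^ (n + 1) + t ^ (n + 2) * q t)
      =O[𝓝 0] fun t : ℂ => t ^ (n + 2)) : a = 0 ∧ b = 0 := by
  have ha : a = 0 := by
    refine coeff_one (n := n) (q := fun t => b + t * q t) (by fun_prop) ?_
    refine (h.trans (isBigO_pow_pow (by lia))).congr_left fun t => ?_
    ring
  subst ha
  exact ⟨rfl, coeff_one (n := n + 1) hq (h.congr_left fun t => by ring)⟩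

theorem coeff_three {a b c : ℂ} {n : ℕ} {q : ℂ → ℂ} (hq : ContinuousAt q 0)
    (h : (fun t : ℂ => a * t ^ n + b * t ^ (n + 1) + c * t ^ (n + 2) + t ^ (n + 3) * q t)
      =O[𝓝 0] fun t : ℂ => t ^ (n + 3)) : a = 0 ∧ b = 0 ∧ c = 0 := by
  have ha : a = 0 := by
    refine coeff_one (n := n) (q := fun t => b + t * (c + t * q t)) (by fun_prop) ?_
    refine (h.trans (isBigO_pow_pow (by lia))).congr_left fun t => ?_
    ring
  subst ha
  exact ⟨rfl, coeff_two (n := n + 1) hq (h.congr_left fun t => by ring)⟩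

/-! ### The family and its invariant -/

/-- The cusp `(t², t³, 0, …, 0)`. -/
def cusp (n : ℕ) (t : ℂ) : Fin (n + 3) → ℂ :=
  t ^ 2 • Pi.single 0 1 + t ^ 3 • Pi.single 1 1

/-- The curve `(t⁵, t⁴ + α t⁵, t³, 0, …, 0)`. -/
def quint (n : ℕ) (α t : ℂ) : Fin (n + 3) → ℂ :=
  t ^ 3 • Pi.single 2 1 + t ^ 4 • Pi.single 1 1 + t ^ 5 • (Pi.single 0 1 + α • Pi.single 1 1)

/-- The pair `G` agrees up to order `5` with the pair `cusp`, `quint α`. -/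
def HasForm (n : ℕ) (α : ℂ) (G : Fin 2 → ℂ → Fin (n + 3) → ℂ) : Prop :=
  ((fun t => G 0 t - cusp n t) =O[𝓝 0] fun t : ℂ => t ^ 6) ∧
  ((fun t => G 1 t - quint n α t) =O[𝓝 0] fun t : ℂ => t ^ 6)

theorem fin_two_ne_zero (n : ℕ) : (2 : Fin (n + 3)) ≠ 0 :=
  Fin.ne_of_val_ne (show 2 ≠ 0 by decide)

theorem fin_two_ne_one (n : ℕ) : (2 : Fin (n + 3)) ≠ 1 :=
  Fin.ne_of_val_ne (show 2 ≠ 1 by decide)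

theorem isBigO_pow_smul {E : Type*} [NormedAddCommGroup E] [NormedSpace ℂ E] (N : ℕ) {q : ℂ → E}
    (hq : ContinuousAt q 0) : (fun t : ℂ => t ^ N • q t) =O[𝓝 0] fun t : ℂ => t ^ N := by
  simpa using (isBigO_refl (fun t : ℂ => t ^ N) (𝓝 0)).smul (hq.tendsto.isBigO_one ℂ)

theorem HasForm.isBigO_zero {n : ℕ} {α : ℂ} {G : Fin 2 → ℂ → Fin (n + 3) → ℂ}
    (h : HasForm n α G) : G 0 =O[𝓝 0] fun t : ℂ => t ^ 2 := by
  have h1 : cusp n =O[𝓝 0] fun t : ℂ => t ^ 2 := by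
    refine (isBigO_pow_smul 2
      (q := fun t => (Pi.single 0 1 + t • Pi.single 1 1 : Fin (n + 3) → ℂ))
      (by fun_prop)).congr_left fun t => ?_
    unfold cusp
    module
  simpa using (h.1.trans (isBigO_pow_pow (by lia))).add h1

theorem HasForm.isBigO_one {n : ℕ} {α : ℂ} {G : Fin 2 → ℂ → Fin (n + 3) → ℂ}
    (h : HasForm n α G) : G 1 =O[𝓝 0] fun t : ℂ => t ^ 3 := by
  have h1 : quint n α =O[𝓝 0] fun t : ℂ => t ^ 3 := by
    refine (isBigO_pow_smul 3
      (q := fun t => (Pi.single 2 1 + t • Pi.single 1 1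
        + t ^ 2 • (Pi.single 0 1 + α • Pi.single 1 1) : Fin (n + 3) → ℂ))
      (by fun_prop)).congr_left fun t => ?_
    unfold quint
    module
  simpa using (h.2.trans (isBigO_pow_pow (by lia))).add h1

theorem tendsto_zero_of_isBigO_pow {E : Type*} [NormedAddCommGroup E] {f : ℂ → E} {m : ℕ}
    (hm : m ≠ 0) (h : f =O[𝓝 0] fun t : ℂ => t ^ m) : Tendsto f (𝓝 0) (𝓝 0) := by
  refine h.trans_tendsto ?_
  have : ContinuousAt (fun t : ℂ => t ^ m) 0 := by fun_prop
  simpa [ContinuousAt, hm] using this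

theorem HasForm.tendsto {n : ℕ} {α : ℂ} {G : Fin 2 → ℂ → Fin (n + 3) → ℂ}
    (h : HasForm n α G) (i : Fin 2) : Tendsto (G i) (𝓝 0) (𝓝 0) := by
  fin_cases i
  · exact tendsto_zero_of_isBigO_pow (by lia) h.isBigO_zero
  · exact tendsto_zero_of_isBigO_pow (by lia) h.isBigO_one

/-- An analytic map fixing `0` is linear up to a quadratic error. -/
theorem isBigO_sub_fderiv {E : Type*} [NormedAddCommGroup E] [NormedSpace ℂ E] {g : E → E}
    (hg : AnalyticAt ℂ g 0) (h0 : g 0 = 0) :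
    (fun x => g x - fderiv ℂ g 0 x) =O[𝓝 0] fun x => ‖x‖ ^ 2 := by
  obtain ⟨p, hp⟩ := hg
  have h1 := hp.isBigO_sub_partialSum_pow 2
  refine h1.congr_left fun x => ?_
  rw [hp.hasFDerivAt.fderiv]
  simp only [zero_add, FormalMultilinearSeries.partialSum, Finset.sum_range_succ,
    Finset.sum_range_zero, hp.coeff_zero, h0]
  congr 1

/-- If `g ∘ G = G' ∘ h` with `G` of order at least `m`, then modulo `t ^ N` with `N ≤ 2 m` only the
linear part of `g` matters, and `G`, `G'` may be replaced by their jets `P`, `P'`. -/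
theorem linear_part {E : Type*} [NormedAddCommGroup E] [NormedSpace ℂ E] {g : E → E}
    (hg : AnalyticAt ℂ g 0) (h0 : g 0 = 0) {G G' P P' : ℂ → E} {h : ℂ → ℂ} {m N : ℕ}
    (hm : m ≠ 0) (hN : N ≤ 2 * m) (hG : G =O[𝓝 0] fun t : ℂ => t ^ m)
    (hP : (fun t => G t - P t) =O[𝓝 0] fun t : ℂ => t ^ N)
    (hP' : (fun t => G' t - P' t) =O[𝓝 0] fun t : ℂ => t ^ N)
    (hh : h =O[𝓝 0] fun t : ℂ => t) (e : (fun t => g (G t)) =ᶠ[𝓝 0] fun t => G' (h t)) :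
    (fun t => fderiv ℂ g 0 (P t) - P' (h t)) =O[𝓝 0] fun t : ℂ => t ^ N := by
  have h1 : (fun t => g (G t) - fderiv ℂ g 0 (G t)) =O[𝓝 0] fun t : ℂ => t ^ N := by
    refine ((isBigO_sub_fderiv hg h0).comp_tendsto (tendsto_zero_of_isBigO_pow hm hG)).trans ?_
    refine IsBigO.trans ?_ (isBigO_pow_pow hN)
    refine (hG.norm_left.pow 2).congr_right fun t => ?_
    ring
  have h2 : (fun t => fderiv ℂ g 0 (G t - P t)) =O[𝓝 0] fun t : ℂ => t ^ N :=
    ((fderiv ℂ g 0).isBigO_comp _ _).trans hP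
  have ht : Tendsto h (𝓝 0) (𝓝 0) :=
    tendsto_zero_of_isBigO_pow one_ne_zero (by simpa using hh)
  have h3 : (fun t => G' (h t) - P' (h t)) =O[𝓝 0] fun t : ℂ => t ^ N :=
    (hP'.comp_tendsto ht).trans (hh.pow N)
  refine ((h3.sub h1).sub h2).congr' ?_ EventuallyEq.rfl
  filter_upwards [e] with t ht
  rw [← ht, map_sub]
  abel

/-- The second order expansion of a germ of a biholomorphism of the line. -/
theorem IsBiholoGerm.expand {h : ℂ → ℂ} (hh : IsBiholoGerm h) :
    ∃ a b : ℂ, ∃ r : ℂ → ℂ, a ≠ 0 ∧ ContinuousAt r 0 ∧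
      h =ᶠ[𝓝 0] fun t => a * t + b * t ^ 2 + t ^ 3 * r t := by
  obtain ⟨r, hr, e⟩ := hh.1.exists_eventuallyEq_sum_add_pow_mul 3
  refine ⟨deriv h 0, iteratedDeriv 2 h 0 / 2, r, hh.deriv_ne_zero, hr.continuousAt, ?_⟩
  filter_upwards [e] with t ht
  rw [ht]
  simp only [Finset.sum_range_succ, Finset.sum_range_zero, iteratedDeriv_zero, iteratedDeriv_one,
    hh.2.1, Nat.factorial, smul_eq_mul]
  push_cast
  ring

theorem IsBiholoGerm.isBigO {h : ℂ → ℂ} (hh : IsBiholoGerm h) : h =O[𝓝 0] fun t : ℂ => t := by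
  simpa [hh.2.1] using hh.1.differentiableAt.isBigO_sub

/-- The seventh power of the parameter is an invariant of the family under `A`-equivalence. -/
theorem pow_seven_eq {n : ℕ} {α β : ℂ} {G G' : Fin 2 → ℂ → Fin (n + 3) → ℂ}
    (hG : HasForm n α G) (hG' : HasForm n β G') (h : AEquiv (n + 3) 2 G G') :
    α ^ 7 = β ^ 7 := by
  obtain ⟨g, hg, k, hk, e⟩ := h
  have E0 := linear_part hg.1 hg.2.1 (m := 2) (N := 4) (by lia) (by lia) hG.isBigO_zero
    (hG.1.trans (isBigO_pow_pow (by lia))) (hG'.1.trans (isBigO_pow_pow (by lia)))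
    (hk 0).isBigO (e 0)
  have E1 := linear_part hg.1 hg.2.1 (m := 3) (N := 6) (by lia) (by lia) hG.isBigO_one
    hG.2 hG'.2 (hk 1).isBigO (e 1)
  obtain ⟨a, a', r, ha, hr, ea⟩ := (hk 0).expand
  obtain ⟨b, b', s, hb, hs, eb⟩ := (hk 1).expand
  generalize fderiv ℂ g 0 = L at E0 E1
  rw [isBigO_pi] at E0 E1
  simp only [cusp, quint, map_add, map_smul, Pi.sub_apply, Pi.add_apply, Pi.smul_apply,
    smul_eq_mul] at E0 E1
  generalize L (Pi.single 0 1) = u at E0 E1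
  generalize L (Pi.single 1 1) = v at E0 E1
  generalize L (Pi.single 2 1) = w at E0 E1
  have s20 : (Pi.single 2 1 : Fin (n + 3) → ℂ) 0 = 0 := Pi.single_eq_of_ne (fin_two_ne_zero n).symm _
  have s21 : (Pi.single 2 1 : Fin (n + 3) → ℂ) 1 = 0 := Pi.single_eq_of_ne (fin_two_ne_one n).symm _
  have s02 : (Pi.single 0 1 : Fin (n + 3) → ℂ) 2 = 0 := Pi.single_eq_of_ne (fin_two_ne_zero n) _
  have s12 : (Pi.single 1 1 : Fin (n + 3) → ℂ) 2 = 0 := Pi.single_eq_of_ne (fin_two_ne_one n) _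
  have E0x := coeff_two (n := 2) (a := u 0 - a ^ 2) (b := v 0 - 2 * a * a')
    (q := fun t => - (2 * a * r t + (a' + t * r t) ^ 2)) (by fun_prop) <| (E0 0).congr' (by
      filter_upwards [ea] with t ht
      rw [ht]; simp; ring) EventuallyEq.rfl
  have E0y := coeff_two (n := 2) (a := u 1) (b := v 1 - a ^ 3)
    (q := fun t => - (3 * a ^ 2 * (a' + t * r t) + 3 * a * t * (a' + t * r t) ^ 2
      + t ^ 2 * (a' + t * r t) ^ 3)) (by fun_prop) <| (E0 1).congr' (by
      filter_upwards [ea] with t ht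
      rw [ht]; simp; ring) EventuallyEq.rfl
  have E0z := coeff_two (n := 2) (a := u 2) (b := v 2) (q := fun t => 0) (by fun_prop) <|
    (E0 2).congr' (by
      filter_upwards [ea] with t ht
      rw [ht]; simp [s02, s12]; ring) EventuallyEq.rfl
  have E1x := coeff_three (n := 3) (a := w 0) (b := v 0) (c := u 0 + α * v 0 - b ^ 5)
    (q := fun t => - (5 * b ^ 4 * (b' + t * s t) + 10 * b ^ 3 * t * (b' + t * s t) ^ 2
      + 10 * b ^ 2 * t ^ 2 * (b' + t * s t) ^ 3 + 5 * b * t ^ 3 * (b' + t * s t) ^ 4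
      + t ^ 4 * (b' + t * s t) ^ 5)) (by fun_prop) <| (E1 0).congr' (by
      filter_upwards [eb] with t ht
      rw [ht]; simp [s20]; ring) EventuallyEq.rfl
  have E1y := coeff_three (n := 3) (a := w 1) (b := v 1 - b ^ 4)
    (c := u 1 + α * v 1 - 4 * b ^ 3 * b' - β * b ^ 5)
    (q := fun t => - (4 * b ^ 3 * s t + 6 * b ^ 2 * (b' + t * s t) ^ 2
        + 4 * b * t * (b' + t * s t) ^ 3 + t ^ 2 * (b' + t * s t) ^ 4)
      - β * (5 * b ^ 4 * (b' + t * s t) + 10 * b ^ 3 * t * (b' + t * s t) ^ 2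
      + 10 * b ^ 2 * t ^ 2 * (b' + t * s t) ^ 3 + 5 * b * t ^ 3 * (b' + t * s t) ^ 4
      + t ^ 4 * (b' + t * s t) ^ 5)) (by fun_prop) <| (E1 1).congr' (by
      filter_upwards [eb] with t ht
      rw [ht]; simp [s21]; ring) EventuallyEq.rfl
  have E1z := coeff_two (n := 3) (a := w 2 - b ^ 3) (b := v 2 - 3 * b ^ 2 * b')
    (q := fun t => u 2 + α * v 2 - (3 * b ^ 2 * s t + 3 * b * (b' + t * s t) ^ 2
      + t * (b' + t * s t) ^ 3)) (by fun_prop) <|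
      ((E1 2).trans (isBigO_pow_pow (by lia : 5 ≤ 6))).congr' (by
      filter_upwards [eb] with t ht
      rw [ht]; simp [s02, s12]; ring) EventuallyEq.rfl
  obtain ⟨x1, -⟩ := E0x
  obtain ⟨x2, x3⟩ := E0y
  obtain ⟨-, x4⟩ := E0z
  obtain ⟨-, x5, x6⟩ := E1x
  obtain ⟨-, x7, x8⟩ := E1y
  obtain ⟨-, x9⟩ := E1z
  have hb' : b' = 0 := by
    rw [x4] at x9
    simpa [hb] using x9
  have y1 : a ^ 2 = b ^ 5 := by
    rw [x5] at x6
    linear_combination x6 - x1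
  have y2 : a ^ 3 = b ^ 4 := by linear_combination x7 - x3
  have y3 : b ^ 4 * (α - b * β) = 0 := by
    rw [hb', x2] at x8
    linear_combination x8 - α * x7
  have y4 : α = b * β := by
    rcases mul_eq_zero.1 y3 with h | h
    · exact absurd h (pow_ne_zero _ hb)
    · exact sub_eq_zero.1 h
  -- `a ^ 6 = b ^ 15 = b ^ 8`, so `b` is a seventh root of unity.
  have y5 : b ^ 8 * (b ^ 7 - 1) = 0 := by
    linear_combination (-(a ^ 4 + a ^ 2 * b ^ 5 + b ^ 10)) * y1 + (a ^ 3 + b ^ 4) * y2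
  have y6 : b ^ 7 = 1 := by
    rcases mul_eq_zero.1 y5 with h | h
    · exact absurd h (pow_ne_zero _ hb)
    · exact sub_eq_zero.1 h
  rw [y4, mul_pow, y6, one_mul]

/-! ### Members of the family are multigerms -/

/-- The components of a pair of the given form meet only at `0`: on the first one the third
coordinate is `O(s⁶)` while the first is `s² + O(s⁶)`, on the second one these coordinates are
`t³ + O(t⁶)` and `O(t⁵)`. -/
theorem HasForm.isMultigerm {n : ℕ} {α : ℂ} {G : Fin 2 → ℂ → Fin (n + 3) → ℂ}
    (h : HasForm n α G) (ha : ∀ i, AnalyticAt ℂ (G i) 0) : IsMultigerm (n + 3) 2 G := by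
  have h0 : ∀ i, G i 0 = 0 := fun i =>
    tendsto_nhds_unique (ha i).continuousAt.tendsto (h.tendsto i)
  refine ⟨fun i => ⟨ha i, h0 i⟩, ?_⟩
  have n02 := fin_two_ne_zero n
  have n12 := fin_two_ne_one n
  obtain ⟨C, hC, hb⟩ := h.1.exists_pos
  obtain ⟨D, hD, hb'⟩ := h.2.exists_pos
  obtain ⟨ε₁, hε₁, H₁⟩ := Metric.eventually_nhds_iff.1 hb.bound
  obtain ⟨ε₂, hε₂, H₂⟩ := Metric.eventually_nhds_iff.1 hb'.bound
  -- Below this radius all error terms are absorbed.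
  obtain ⟨ε, hε, hε1, hε2, hε3, hε4, hε5⟩ : ∃ ε > (0 : ℝ), ε ≤ ε₁ ∧ ε ≤ ε₂ ∧ ε ≤ 1 / 8 ∧
      C * ε ≤ 1 / 8 ∧ D * ε ≤ 1 / 8 := by
    refine ⟨min (min ε₁ ε₂) (min (1 / 8) (min (1 / (8 * C)) (1 / (8 * D)))), by positivity,
      ?_, ?_, ?_, ?_, ?_⟩
    · simp
    · simp
    · simp
    · calc C * _ ≤ C * (1 / (8 * C)) := by gcongr; simp
        _ = 1 / 8 := by field_simp
    · calc D * _ ≤ D * (1 / (8 * D)) := by gcongr; simp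
        _ = 1 / 8 := by field_simp
  have key : ∀ s t : ℂ, ‖s‖ < ε → ‖t‖ < ε → G 0 s = G 1 t → G 0 s = 0 := by
    intro s t hs ht e
    have I₁ := H₁ (y := s) (by simpa using hs.trans_le hε1)
    have I₂ := H₂ (y := t) (by simpa using ht.trans_le hε2)
    have I₁x := (norm_le_pi_norm _ 0).trans I₁
    have I₁z := (norm_le_pi_norm _ 2).trans I₁
    have I₂x := (norm_le_pi_norm _ 0).trans I₂
    have I₂z := (norm_le_pi_norm _ 2).trans I₂
    simp [cusp, quint, ← e, n02, n12, n02.symm] at I₁x I₁z I₂x I₂z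
    have J₁ : ‖s‖ ^ 2 ≤ C * ‖s‖ ^ 6 + (‖t‖ ^ 5 + D * ‖t‖ ^ 6) := by
      calc ‖s‖ ^ 2 = ‖(G 0 s 0 - t ^ 5) - (G 0 s 0 - s ^ 2) + t ^ 5‖ := by
            rw [← norm_pow]; congr 1; ring
        _ ≤ ‖G 0 s 0 - t ^ 5‖ + ‖G 0 s 0 - s ^ 2‖ + ‖t ^ 5‖ :=
            (norm_add_le _ _).trans (by gcongr; exact norm_sub_le _ _)
        _ ≤ _ := by rw [norm_pow t]; linarith
    have J₂ : ‖t‖ ^ 3 ≤ D * ‖t‖ ^ 6 + C * ‖s‖ ^ 6 := by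
      calc ‖t‖ ^ 3 = ‖G 0 s 2 - (G 0 s 2 - t ^ 3)‖ := by
            rw [← norm_pow]; congr 1; ring
        _ ≤ ‖G 0 s 2‖ + ‖G 0 s 2 - t ^ 3‖ := norm_sub_le _ _
        _ ≤ _ := by linarith
    have hA : ‖s‖ = 0 := by
      have hs0 := norm_nonneg s
      have ht0 := norm_nonneg t
      generalize ‖s‖ = A at *
      generalize ‖t‖ = B at *
      have K₁ : C * A ^ 6 ≤ A ^ 2 / 8 := by
        calc C * A ^ 6 = (C * A) * (A ^ 3 * A ^ 2) := by ring
          _ ≤ (1 / 8) * (1 * A ^ 2) := by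
              gcongr
              · exact (by gcongr : C * A ≤ C * ε).trans hε4
              · exact pow_le_one₀ hs0 (by linarith)
          _ = _ := by ring
      have K₂ : D * B ^ 6 ≤ B ^ 3 / 8 := by
        calc D * B ^ 6 = (D * B) * (B ^ 2 * B ^ 3) := by ring
          _ ≤ (1 / 8) * (1 * B ^ 3) := by
              gcongr
              · exact (by gcongr : D * B ≤ D * ε).trans hε5
              · exact pow_le_one₀ ht0 (by linarith)
          _ = _ := by ring
      have K₃ : B ^ 5 ≤ B ^ 3 / 8 := by
        calc B ^ 5 = B * (B * B ^ 3) := by ring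
          _ ≤ (1 / 8) * (1 * B ^ 3) := by
              gcongr
              · linarith
              · linarith
          _ = _ := by ring
      have hB : 0 ≤ B ^ 3 := by positivity
      have : A ^ 2 ≤ 0 := by linarith
      nlinarith
    rw [norm_eq_zero.1 hA, h0]
  refine ⟨ε, hε, fun i j hij s t hs ht e => ?_⟩
  fin_cases i <;> fin_cases j
  · simp at hij
  · exact key s t hs ht e
  · exact e.trans (key t s ht hs e.symm)
  · simp at hij

/-! ### Reading off the form from the jet -/

theorem isBigO_of_iteratedDeriv_eq {E : Type*} [NormedAddCommGroup E] [NormedSpace ℂ E]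
    [CompleteSpace E] {f p : ℂ → E} (hf : AnalyticAt ℂ f 0) (hp : AnalyticAt ℂ p 0) {N : ℕ}
    (h : ∀ i < N, iteratedDeriv i f 0 = iteratedDeriv i p 0) :
    (fun t => f t - p t) =O[𝓝 0] fun t : ℂ => t ^ N := by
  obtain ⟨r, hr, e⟩ := (hf.sub hp).exists_eventuallyEq_sum_add_pow_mul N
  refine (isBigO_pow_smul N hr.continuousAt).congr' ?_ EventuallyEq.rfl
  filter_upwards [e] with t ht
  rw [← Pi.sub_apply, ht, Finset.sum_eq_zero, zero_add]
  intro i hi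
  rw [iteratedDeriv_sub hf.contDiffAt hp.contDiffAt, h i (Finset.mem_range.1 hi), sub_self,
    smul_zero]

theorem pad_eq_cusp (n : ℕ) : (pad 2 (n + 3) fun t => ![t ^ 2, t ^ 3]) = cusp n := by
  funext t j
  obtain ⟨j, hj⟩ := j
  rcases j with _ | _ | j <;> simp [pad, cusp, Fin.ext_iff]

theorem pad_eq_quint (n : ℕ) (α : ℂ) :
    (pad 3 (n + 3) fun t => ![t ^ 5, t ^ 4 + α * t ^ 5, t ^ 3]) = quint n α := by
  funext t j
  have hv : 2 % (n + 3) = 2 := Nat.mod_eq_of_lt (by lia)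
  obtain ⟨j, hj⟩ := j
  rcases j with _ | _ | _ | j <;>
    simp [pad, quint, Pi.single_apply, Fin.ext_iff, hv, mul_comm]

theorem hasForm_of_jet {n : ℕ} {α : ℂ} {F : Fin 2 → ℂ → Fin (n + 3) → ℂ}
    (hF : ∀ i, AnalyticAt ℂ (F i) 0)
    (hjet : jetF (n + 3) 2 5 F = jetF (n + 3) 2 5 ![cusp n, quint n α]) : HasForm n α F := by
  constructor
  · refine isBigO_of_iteratedDeriv_eq (hF 0) (by unfold cusp; fun_prop) fun i hi => ?_
    exact congrFun (congrFun hjet 0) ⟨i, hi⟩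
  · refine isBigO_of_iteratedDeriv_eq (hF 1) (by unfold quint; fun_prop) fun i hi => ?_
    exact congrFun (congrFun hjet 1) ⟨i, hi⟩

/-! ### The one-parameter deformation -/

/-- The pair `F` with `ε t⁵` added to the second coordinate of its second component. -/
def deform (n : ℕ) (F : Fin 2 → ℂ → Fin (n + 3) → ℂ) (ε : ℂ) : Fin 2 → ℂ → Fin (n + 3) → ℂ :=
  ![F 0, F 1 + ε • fun t => t ^ 5 • Pi.single 1 1]

theorem HasForm.deform {n : ℕ} {α : ℂ} {F : Fin 2 → ℂ → Fin (n + 3) → ℂ}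
    (h : HasForm n α F) (ε : ℂ) : HasForm n (α + ε) (deform n F ε) := by
  refine ⟨h.1, h.2.congr_left fun t => ?_⟩
  simp only [CurveSing.deform, quint, Matrix.cons_val_one, Matrix.cons_val_zero, Pi.add_apply,
    Pi.smul_apply]
  module

theorem analyticAt_deform {n : ℕ} {F : Fin 2 → ℂ → Fin (n + 3) → ℂ}
    (hF : ∀ i, AnalyticAt ℂ (F i) 0) (ε : ℂ) (i : Fin 2) : AnalyticAt ℂ (deform n F ε i) 0 := by
  fin_cases i
  · exact hF 0
  · exact (hF 1).add (by fun_prop)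

theorem continuous_jetF_deform {n : ℕ} {F : Fin 2 → ℂ → Fin (n + 3) → ℂ}
    (hF : ∀ i, AnalyticAt ℂ (F i) 0) (m : ℕ) :
    Continuous fun ε => jetF (n + 3) 2 m (deform n F ε) := by
  refine continuous_pi fun i => continuous_pi fun j => ?_
  fin_cases i
  · exact (continuous_const : Continuous fun _ : ℂ => iteratedDeriv j (F 0) 0)
  · have hp : AnalyticAt ℂ (fun t : ℂ => t ^ 5 • (Pi.single 1 1 : Fin (n + 3) → ℂ)) 0 := by
      fun_prop
    have : ∀ ε : ℂ, jetF (n + 3) 2 m (deform n F ε) 1 j = iteratedDeriv j (F 1) 0 +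
        ε • iteratedDeriv j (fun t : ℂ => t ^ 5 • (Pi.single 1 1 : Fin (n + 3) → ℂ)) 0 := by
      intro ε
      change iteratedDeriv j (F 1 + ε • fun t => t ^ 5 • Pi.single 1 1) 0 = _
      have hp' : AnalyticAt ℂ (ε • fun t : ℂ => t ^ 5 • (Pi.single 1 1 : Fin (n + 3) → ℂ)) 0 :=
        hp.const_smul
      rw [iteratedDeriv_add (hF 1).contDiffAt hp'.contDiffAt,
        iteratedDeriv_const_smul hp.contDiffAt]
    exact (continuous_congr this).2 (by fun_prop)

end CurveSing

open CurveSing in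
/-- The family of pairs with `5`-jet `((t², t³, 0, …, 0), (t⁵, t⁴+αt⁵, t³, 0, …, 0))`
is not simple. -/
theorem not_simple_family_jet5 (d : ℕ) (hd : 3 ≤ d) (α : ℂ)
    (F : Fin 2 → ℂ → Fin d → ℂ) (hF : IsMultigerm d 2 F)
    (hjet : jetF d 2 5 F = jetF d 2 5
      ![pad 2 d fun t => ![t ^ 2, t ^ 3],
        pad 3 d fun t => ![t ^ 5, t ^ 4 + α * t ^ 5, t ^ 3]]) :
    ¬ Simple d 2 F := by
  obtain ⟨n, rfl⟩ : ∃ n, d = n + 3 := ⟨d - 3, by lia⟩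
  have hA : ∀ i, AnalyticAt ℂ (F i) 0 := fun i => (hF.1 i).1
  rw [pad_eq_cusp, pad_eq_quint] at hjet
  have hform := hasForm_of_jet hA hjet
  rintro ⟨m, U, hU, hFU, N, R, hR⟩
  have hS : {ε : ℂ | jetF (n + 3) 2 m (deform n F ε) ∈ U} ∈ 𝓝 (0 : ℂ) := by
    refine (hU.preimage (continuous_jetF_deform hA m)).mem_nhds ?_
    have : deform n F 0 = F := by
      funext i
      fin_cases i <;> simp [deform]
    simpa [this] using hFU
  refine infinite_of_mem_nhds 0 hS ?_
  have hfin : (⋃ i, {ε : ℂ | AEquiv (n + 3) 2 (deform n F ε) (R i)}).Finite := by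
    refine Set.finite_iUnion fun i => ?_
    rcases Set.eq_empty_or_nonempty {ε : ℂ | AEquiv (n + 3) 2 (deform n F ε) (R i)} with h | h
    · rw [h]
      exact Set.finite_empty
    · obtain ⟨δ, hδ⟩ := h
      refine ((Polynomial.nthRoots 7 ((α + δ) ^ 7)).toFinset.finite_toSet.image
        fun x => x - α).subset fun ε hε => ⟨α + ε, ?_, by simp⟩
      have e : AEquiv (n + 3) 2 (deform n F ε) (deform n F δ) :=
        AEquiv.trans hε (AEquiv.symm (hform.deform δ).tendsto hδ)
      simpa [Polynomial.mem_nthRoots] using pow_seven_eq (hform.deform ε) (hform.deform δ) e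
  refine hfin.subset fun ε hε => Set.mem_iUnion.2 ?_
  exact hR _ ((hform.deform ε).isMultigerm (analyticAt_deform hA ε)) hε
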